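/- arXiv:2212.07012 — 4 statements merged into one kernel-verified Lean document; each statement's English description precedes it below -/
import Mathlib

section
/- For every w ∈ ℂ, the set {τ ∈ ℍ : E2(τ) ≠ 0 and τ − 6i/(π E2(τ)) = w} is infinite; moreover, the set {τ ∈ ℍ : E2(τ) = 0} is infinite. In other words, the function p attains every value in the Riemann sphere infinitely often on ℍ. -/
/-!
Write `p = N / D` with `D = π E₂` and `N = τ D - 6i`. Quasi-modularity of `E₂` says that under
`τ ↦ (aτ + b) / (cτ + d)` the vector `(N, D)` is multiplied by `cτ + d` and by the matrix with rows
`(a, b)` and `(c, d)`. Hence `p` commutes with `SL₂(ℤ)`, as a map to the Riemann sphere, and all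
values `[x : y]`, including `∞ = [1 : 0]`, can be treated alike through the equation `y N = x D`.

On the imaginary axis `D` is real and increasing, with `D(i) = 3`, so the intermediate value theorem
gives `t ∈ [1, 2]` with `t D(it) = 6`, that is, a zero `τ₀ = it` of `p`. Near `τ₀` the function `p`
is open, since if `N = c D` held identically, translation by `1` would give `D = 0`, and then
`N = -6i ≠ 0 = c D`. As `x / (nx + y) → 0`, for all large `n` there is `τₙ` close to `τ₀` with
`p(τₙ) = x / (nx + y)`, and then `p` takes the value `[x : y]` at `τₙ / (1 - nτₙ)`. The imaginary
parts of these points are positive and tend to `0`, so there are infinitely many of them.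
-/

/-- `q = exp(2πiτ)`. -/
noncomputable def qexp (τ : ℂ) : ℂ := Complex.exp (2 * Real.pi * Complex.I * τ)

/-- Divisor power sum `σ_k(n) = ∑_{d | n} d^k`, as a complex number. -/
noncomputable def sigmaC (k n : ℕ) : ℂ := ∑ d ∈ Nat.divisors n, (d : ℂ) ^ k

/-- Eisenstein series `E₂`. -/
noncomputable def E2 (τ : ℂ) : ℂ := 1 - 24 * ∑' n : ℕ, sigmaC 1 (n + 1) * qexp τ ^ (n + 1)

/-- Eisenstein series `E₄`. -/
noncomputable def E4 (τ : ℂ) : ℂ := 1 + 240 * ∑' n : ℕ, sigmaC 3 (n + 1) * qexp τ ^ (n + 1)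

/-- Eisenstein series `E₆`. -/
noncomputable def E6 (τ : ℂ) : ℂ := 1 - 504 * ∑' n : ℕ, sigmaC 5 (n + 1) * qexp τ ^ (n + 1)

/-- The discriminant form `Δ = (E₄³ - E₆²)/1728`. -/
noncomputable def Δfun (τ : ℂ) : ℂ := (E4 τ ^ 3 - E6 τ ^ 2) / 1728

/-- The ratio of quasi-periods `p(τ) = τ - 6i/(π E₂(τ))`. -/
noncomputable def pfun (τ : ℂ) : ℂ := τ - 6 * Complex.I / (Real.pi * E2 τ)

open Complex Filter Topology Bornology
open UpperHalfPlane hiding I continuous_im mdifferentiable_iff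
open scoped MatrixGroups

lemma sq_mul_im_mul_im_smul_le_one (γ : SL(2, ℤ)) (z : ℍ) :
    (γ 1 0 : ℝ) ^ 2 * z.im * (γ • z).im ≤ 1 := by
  rw [ModularGroup.im_smul_eq_div_normSq, mul_div_assoc',
    div_le_one (normSq_denom_pos _ z.im_ne_zero)]
  calc (γ 1 0 : ℝ) ^ 2 * z.im * z.im = (γ 1 0 * z.im) ^ 2 := by ring
    _ ≤ normSq (denom γ z) := by simpa using c_mul_im_sq_le_normSq_denom (γ : GL (Fin 2) ℝ) z

lemma infinite_of_forall_exists_im_lt {s : Set ℍ} (h : ∀ ε > 0, ∃ z ∈ s, z.im < ε) :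
    s.Infinite := by
  intro hs
  obtain ⟨z₁, hz₁, -⟩ := h 1 one_pos
  obtain ⟨z₀, -, hmin⟩ := Set.exists_min_image s UpperHalfPlane.im hs ⟨z₁, hz₁⟩
  obtain ⟨z, hz, hlt⟩ := h z₀.im z₀.im_pos
  exact (hmin z hz).not_gt hlt

section Asymptotics

variable {𝕜 : Type*} [RCLike 𝕜] {x y : 𝕜}

lemma tendsto_natCast_mul_add_cobounded (hx : x ≠ 0) (y : 𝕜) :
    Tendsto (fun n : ℕ ↦ n * x + y) atTop (cobounded 𝕜) :=
  (tendsto_add_const_cobounded y).comp <|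
    (tendsto_mul_right_cobounded hx).comp tendsto_natCast_atTop_cobounded

lemma eventually_natCast_mul_add_ne_zero (h : x ≠ 0 ∨ y ≠ 0) :
    ∀ᶠ n : ℕ in atTop, n * x + y ≠ 0 := by
  rcases eq_or_ne x 0 with rfl | hx
  · exact .of_forall fun n ↦ by simpa using h
  · exact (tendsto_natCast_mul_add_cobounded hx y).eventually_ne_cobounded 0

lemma tendsto_div_natCast_mul_add (x y : 𝕜) :
    Tendsto (fun n : ℕ ↦ x / (n * x + y)) atTop (𝓝 0) := by
  rcases eq_or_ne x 0 with rfl | hx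
  · simp
  · simpa [div_eq_mul_inv] using
      (tendsto_inv₀_cobounded.comp (tendsto_natCast_mul_add_cobounded hx y)).const_mul x

end Asymptotics

lemma E2_coe (z : ℍ) : E2 z = EisensteinSeries.E2 z := by
  rw [EisensteinSeries.E2_eq_tsum_cexp, E2,
    tsum_pnat_eq_tsum_succ (f := fun n : ℕ ↦
      (ArithmeticFunction.sigma 1 n : ℂ) * cexp (2 * Real.pi * I * z) ^ n)]
  simp [sigmaC, qexp, ArithmeticFunction.sigma_apply]

lemma differentiableOn_E2 : DifferentiableOn ℂ E2 upperHalfPlaneSet := by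
  refine (UpperHalfPlane.mdifferentiable_iff.mp E2_mdifferentiable).congr fun z hz ↦ ?_
  simpa [ofComplex_apply_of_im_pos hz] using E2_coe ⟨z, hz⟩

lemma analyticAt_E2 {z : ℂ} (hz : 0 < z.im) : AnalyticAt ℂ E2 z :=
  differentiableOn_E2.analyticAt (isOpen_upperHalfPlaneSet.mem_nhds hz)

lemma E2_coe_smul (γ : SL(2, ℤ)) (z : ℍ) :
    E2 ↑(γ • z) = denom γ z ^ 2 * E2 z - 6 * I * γ 1 0 * denom γ z / Real.pi := by
  have hpi : (Real.pi : ℂ) ≠ 0 := ofReal_ne_zero.mpr Real.pi_ne_zero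
  have hd : denom γ z ≠ 0 := denom_ne_zero γ z
  have h := congrFun (EisensteinSeries.E2_slash_action γ) z
  simp only [ModularForm.SL_slash_apply, Pi.sub_apply, Pi.smul_apply, smul_eq_mul,
    EisensteinSeries.D2, riemannZeta_two, ← E2_coe] at h
  rw [zpow_neg, mul_inv_eq_iff_eq_mul₀ (zpow_ne_zero 2 hd)] at h
  rw [h]
  field_simp

/-- The denominator `π E₂(τ)` of `p`. Up to the factor `π / 3` it is the quasi-period of the
lattice `ℤ + ℤτ` along `1`. -/
noncomputable def pDen (τ : ℂ) : ℂ := Real.pi * E2 τ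

/-- The numerator `π τ E₂(τ) - 6i` of `p`, written in terms of `pDen`. Up to the factor `π / 3`
it is the quasi-period of the lattice `ℤ + ℤτ` along `τ`. -/
noncomputable def pNum (τ : ℂ) : ℂ := τ * pDen τ - 6 * I

lemma E2_eq_zero_iff {τ : ℂ} : E2 τ = 0 ↔ pDen τ = 0 := by
  simp [pDen, Real.pi_ne_zero]

lemma pfun_eq_div {τ : ℂ} (h : E2 τ ≠ 0) : pfun τ = pNum τ / pDen τ := by
  have hD : pDen τ ≠ 0 := E2_eq_zero_iff.not.mp h
  rw [pNum, sub_div, mul_div_cancel_right₀ _ hD, pfun, pDen]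

lemma E2_ne_zero_and_pfun_eq_iff {τ w : ℂ} :
    E2 τ ≠ 0 ∧ pfun τ = w ↔ pNum τ = w * pDen τ := by
  refine ⟨fun ⟨hE, hw⟩ ↦ ?_, fun h ↦ ?_⟩
  · rwa [pfun_eq_div hE, div_eq_iff (E2_eq_zero_iff.not.mp hE)] at hw
  · have hE : E2 τ ≠ 0 := fun h0 ↦ by
      simp [pNum, E2_eq_zero_iff.mp h0] at h
    exact ⟨hE, by rwa [pfun_eq_div hE, div_eq_iff (E2_eq_zero_iff.not.mp hE)]⟩

lemma pDen_coe_smul (γ : SL(2, ℤ)) (z : ℍ) :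
    pDen ↑(γ • z) = denom γ z * (γ 1 0 * pNum z + γ 1 1 * pDen z) := by
  have hpi : (Real.pi : ℂ) ≠ 0 := ofReal_ne_zero.mpr Real.pi_ne_zero
  rw [pNum, pDen, pDen, E2_coe_smul, ModularGroup.denom_apply]
  field_simp
  ring

lemma pNum_coe_smul (γ : SL(2, ℤ)) (z : ℍ) :
    pNum ↑(γ • z) = denom γ z * (γ 0 0 * pNum z + γ 0 1 * pDen z) := by
  have hd : denom γ z ≠ 0 := denom_ne_zero γ z
  have hdet : (γ 0 0 : ℂ) * γ 1 1 - γ 0 1 * γ 1 0 = 1 := by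
    exact_mod_cast (Matrix.det_fin_two γ.1).symm.trans γ.2
  have hsmul : (↑(γ • z) : ℂ) * denom γ z = γ 0 0 * z + γ 0 1 := by
    rw [coe_specialLinearGroup_apply, ModularGroup.denom_apply] at *
    simpa using div_mul_cancel₀ _ hd
  rw [pNum, pDen_coe_smul, ← mul_assoc, hsmul, ModularGroup.denom_apply, pNum]
  linear_combination 6 * I * hdet

lemma mul_pNum_coe_smul_eq_iff (γ : SL(2, ℤ)) (z : ℍ) (x y : ℂ) :
    y * pNum ↑(γ • z) = x * pDen ↑(γ • z) ↔
      (γ 0 0 * y - γ 1 0 * x) * pNum z = (γ 1 1 * x - γ 0 1 * y) * pDen z := by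
  rw [pNum_coe_smul, pDen_coe_smul, mul_left_comm, mul_left_comm x,
    mul_right_inj' (denom_ne_zero γ z)]
  constructor <;> intro h <;> linear_combination h

lemma hasSum_E2_mul_I {t : ℝ} (ht : 0 < t) :
    HasSum (fun m : ℕ ↦ (((if m = 0 then 1 else -24 * (ArithmeticFunction.sigma 1 m : ℝ)) *
      Real.exp (-(2 * Real.pi * t)) ^ m : ℝ) : ℂ)) (E2 (t * I)) := by
  have hz : 0 < ((t : ℂ) * I).im := by simpa using ht
  have hq : cexp (2 * Real.pi * I * (t * I)) = (Real.exp (-(2 * Real.pi * t)) : ℝ) := by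
    rw [ofReal_exp]
    congr 1
    push_cast
    linear_combination (2 * Real.pi * t : ℂ) * I_sq
  have h := EisensteinSeries.hasSum_qExpansion_E2 (z := ⟨t * I, hz⟩)
  rw [← E2_coe] at h
  convert! h using 2 with m
  simp only [smul_eq_mul, hq]
  split_ifs <;> push_cast <;> rfl

lemma im_pDen_mul_I {t : ℝ} (ht : 0 < t) : (pDen (t * I)).im = 0 := by
  have h := hasSum_im (hasSum_E2_mul_I ht)
  simp only [ofReal_im] at h
  simp [pDen, h.unique hasSum_zero]

lemma monotoneOn_re_pDen_mul_I : MonotoneOn (fun t : ℝ ↦ (pDen (t * I)).re) (Set.Ioi 0) := by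
  intro s hs t ht hst
  have hE2 : (E2 (s * I)).re ≤ (E2 (t * I)).re := by
    refine hasSum_le (fun m ↦ ?_) (hasSum_re (hasSum_E2_mul_I hs))
      (hasSum_re (hasSum_E2_mul_I ht))
    simp only [ofReal_re]
    split_ifs with hm
    · simp [hm]
    · have hpow : Real.exp (-(2 * Real.pi * t)) ^ m ≤ Real.exp (-(2 * Real.pi * s)) ^ m := by
        gcongr
      exact mul_le_mul_of_nonpos_left hpow (by simp)
  simpa [pDen] using mul_le_mul_of_nonneg_left hE2 Real.pi_pos.le

lemma pDen_I : pDen I = 3 := by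
  have hS : ModularGroup.S • UpperHalfPlane.I = UpperHalfPlane.I := by
    rw [modular_S_smul]
    ext
    simp
  have hsmul := pDen_coe_smul ModularGroup.S UpperHalfPlane.I
  rw [hS, ModularGroup.denom_S] at hsmul
  have h : pDen I = I * (I * pDen I - 6 * I) := by
    simpa [ModularGroup.S, pNum] using hsmul
  linear_combination h / 2 + (pDen I - 6) / 2 * I_sq

lemma exists_pNum_eq_zero : ∃ z : ℍ, pNum z = 0 := by
  have hcont : ContinuousOn (fun t : ℝ ↦ t * (pDen (t * I)).re) (Set.Icc 1 2) := by
    refine continuousOn_id.mul (continuous_re.comp_continuousOn (continuousOn_const.mul ?_))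
    refine differentiableOn_E2.continuousOn.comp (by fun_prop) fun t ht ↦ ?_
    simpa using one_pos.trans_le ht.1
  have h₁ : (pDen ((1 : ℝ) * I)).re = 3 := by simp [pDen_I]
  have h₂ : 3 ≤ (pDen ((2 : ℝ) * I)).re :=
    h₁ ▸ monotoneOn_re_pDen_mul_I (Set.mem_Ioi.mpr one_pos) (Set.mem_Ioi.mpr two_pos) one_le_two
  obtain ⟨t, ht, h⟩ : ∃ t ∈ Set.Icc (1 : ℝ) 2, t * (pDen (t * I)).re = 6 :=
    intermediate_value_Icc one_le_two hcont ⟨by simp only [h₁]; norm_num, by linarith⟩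
  have ht₀ : 0 < t := one_pos.trans_le ht.1
  have hreal : pDen (t * I) = (pDen (t * I)).re :=
    Complex.ext rfl (by simpa using im_pDen_mul_I ht₀)
  have hmul : t * pDen (t * I) = 6 := by
    rw [hreal]
    exact_mod_cast h
  refine ⟨⟨t * I, by simpa using ht₀⟩, ?_⟩
  rw [pNum]
  linear_combination I * hmul

lemma not_eventually_pNum_eq (z : ℍ) (c : ℂ) : ¬ ∀ᶠ u in 𝓝 (z : ℂ), pNum u = c * pDen u := by
  intro h
  have hD : AnalyticOnNhd ℂ pDen upperHalfPlaneSet :=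
    fun u hu ↦ analyticAt_const.mul (analyticAt_E2 hu)
  have hN : AnalyticOnNhd ℂ pNum upperHalfPlaneSet :=
    (analyticOnNhd_id.mul hD).sub analyticOnNhd_const
  have heq : Set.EqOn pNum (fun u ↦ c * pDen u) upperHalfPlaneSet :=
    hN.eqOn_of_preconnected_of_eventuallyEq (analyticOnNhd_const.mul hD)
      (convex_halfSpace_im_gt 0).isPreconnected z.im_pos h
  have h₀ : pNum z = c * pDen z := heq z.im_pos
  have h₁ : 1 * pNum ↑(ModularGroup.T • z) = c * pDen ↑(ModularGroup.T • z) := by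
    simpa using heq (ModularGroup.T • z).im_pos
  have h₂ : pNum z = (c - 1) * pDen z := by
    simpa [ModularGroup.T] using (mul_pNum_coe_smul_eq_iff ModularGroup.T z c 1).mp h₁
  have hD₀ : pDen z = 0 := by linear_combination h₂ - h₀
  simp [pNum, hD₀] at h₀

lemma nhds_pfun_le_map_nhds (z : ℍ) (hE : E2 z ≠ 0) :
    𝓝 (pfun z) ≤ map pfun (𝓝 (z : ℂ)) := by
  have hE2 : AnalyticAt ℂ E2 z := analyticAt_E2 z.im_pos
  have hpi : (Real.pi : ℂ) ≠ 0 := ofReal_ne_zero.mpr Real.pi_ne_zero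
  have hp : AnalyticAt ℂ pfun z :=
    analyticAt_id.sub (analyticAt_const.div (analyticAt_const.mul hE2) (mul_ne_zero hpi hE))
  refine hp.eventually_constant_or_nhds_le_map_nhds.resolve_left fun hconst ↦ ?_
  refine not_eventually_pNum_eq z (pfun z) ?_
  filter_upwards [hconst, hE2.continuousAt.eventually_ne hE] with u hu hEu
  exact E2_ne_zero_and_pfun_eq_iff.mp ⟨hEu, hu⟩

lemma eventually_exists_mul_pNum_eq {z : ℍ} (hz : pNum z = 0) {x y : ℂ} (hxy : x ≠ 0 ∨ y ≠ 0)
    {U : Set ℂ} (hU : U ∈ 𝓝 (z : ℂ)) :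
    ∀ᶠ n : ℕ in atTop, ∃ u ∈ U, (n * x + y) * pNum u = x * pDen u := by
  obtain ⟨hE, hp⟩ : E2 z ≠ 0 ∧ pfun z = 0 := E2_ne_zero_and_pfun_eq_iff.mpr (by simpa using hz)
  have hUE : U ∩ {u | E2 u ≠ 0} ∈ 𝓝 (z : ℂ) :=
    inter_mem hU ((analyticAt_E2 z.im_pos).continuousAt.eventually_ne hE)
  have himage : pfun '' (U ∩ {u | E2 u ≠ 0}) ∈ 𝓝 0 := by
    simpa only [hp] using nhds_pfun_le_map_nhds z hE (image_mem_map hUE)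
  filter_upwards [tendsto_div_natCast_mul_add x y himage,
    eventually_natCast_mul_add_ne_zero hxy] with n ⟨u, ⟨huU, hEu⟩, hpu⟩ hn
  refine ⟨u, huU, ?_⟩
  rw [E2_ne_zero_and_pfun_eq_iff.mp ⟨hEu, hpu⟩]
  field_simp

/-- The matrix with rows `(1, 0)` and `(-n, 1)`: it fixes the cusp `0`, which is where the solutions
accumulate. -/
def lowerUnipotent (n : ℕ) : SL(2, ℤ) := ⟨!![1, 0; -n, 1], by simp⟩

lemma mul_pNum_lowerUnipotent_smul_eq_iff (n : ℕ) (z : ℍ) (x y : ℂ) :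
    y * pNum ↑(lowerUnipotent n • z) = x * pDen ↑(lowerUnipotent n • z) ↔
      (n * x + y) * pNum z = x * pDen z := by
  rw [mul_pNum_coe_smul_eq_iff]
  simp [lowerUnipotent, add_comm]

theorem infinite_setOf_mul_pNum_eq {x y : ℂ} (hxy : x ≠ 0 ∨ y ≠ 0) :
    {z : ℍ | y * pNum z = x * pDen z}.Infinite := by
  obtain ⟨z₀, hz₀⟩ := exists_pNum_eq_zero
  have hU : {u : ℂ | z₀.im / 2 < u.im} ∈ 𝓝 (z₀ : ℂ) :=
    (isOpen_lt continuous_const continuous_im).mem_nhds (half_lt_self z₀.im_pos)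
  refine infinite_of_forall_exists_im_lt fun ε hε ↦ ?_
  have hlarge : ∀ᶠ n : ℕ in atTop, 1 < (n : ℝ) ^ 2 * (z₀.im / 2 * ε) :=
    ((tendsto_pow_atTop two_ne_zero).comp tendsto_natCast_atTop_atTop).atTop_mul_const
      (mul_pos (half_pos z₀.im_pos) hε) |>.eventually_gt_atTop 1
  obtain ⟨n, ⟨u, hu, hn⟩, hlt⟩ := ((eventually_exists_mul_pNum_eq hz₀ hxy hU).and hlarge).exists
  lift u to ℍ using (half_pos z₀.im_pos).trans hu
  refine ⟨lowerUnipotent n • u, (mul_pNum_lowerUnipotent_smul_eq_iff n u x y).mpr hn, ?_⟩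
  have hle := sq_mul_im_mul_im_smul_le_one (lowerUnipotent n) u
  have hc : ((lowerUnipotent n 1 0 : ℤ) : ℝ) ^ 2 = (n : ℝ) ^ 2 := by simp [lowerUnipotent]
  rw [hc] at hle
  refine lt_of_mul_lt_mul_left (hle.trans_lt ?_) (by positivity : 0 ≤ (n : ℝ) ^ 2 * u.im)
  calc 1 < (n : ℝ) ^ 2 * (z₀.im / 2 * ε) := hlt
    _ = (n : ℝ) ^ 2 * (z₀.im / 2) * ε := by ring
    _ ≤ (n : ℝ) ^ 2 * u.im * ε := by gcongr; exact hu.le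

/-- Heins' theorem: the function `p(τ) = τ - 6i/(π E₂(τ))` attains every value in the
Riemann sphere infinitely often on the upper half-plane. -/
theorem p_attains_every_value_infinitely_often (w : ℂ) :
    {τ : ℂ | 0 < τ.im ∧ E2 τ ≠ 0 ∧ pfun τ = w}.Infinite ∧
    {τ : ℂ | 0 < τ.im ∧ E2 τ = 0}.Infinite := by
  have coe_infinite {s : Set ℍ} (hs : s.Infinite) : ((↑) '' s : Set ℂ).Infinite :=
    hs.image UpperHalfPlane.coe_injective.injOn
  constructor
  · refine (coe_infinite (infinite_setOf_mul_pNum_eq (x := w) (y := 1) (by simp))).mono ?_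
    rintro _ ⟨z, hz, rfl⟩
    exact ⟨z.im_pos, E2_ne_zero_and_pfun_eq_iff.mpr (by simpa using hz)⟩
  · refine (coe_infinite (infinite_setOf_mul_pNum_eq (x := 1) (y := 0) (by simp))).mono ?_
    rintro _ ⟨z, hz, rfl⟩
    exact ⟨z.im_pos, E2_eq_zero_iff.mpr (by simpa using hz.symm)⟩
end

section
/- For every u ∈ ℂ with u ∉ Γ and u + ω₂ ∉ Γ, one has ζ(u + ω₂) − ζ(u) = (π²/(3ω₂)) · E2(τ), where τ = ω₁/ω₂. In particular, the quasi-period η₂ := ζ(u + ω₂) − ζ(u) is independent of u and equals (π²/(3ω₂)) E2(τ). -/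
/-- The rank-2 lattice generated by `ω₁` and `ω₂`. -/
def lattice (ω₁ ω₂ : ℂ) : Set ℂ := {z | ∃ k n : ℤ, z = (k : ℂ) * ω₁ + (n : ℂ) * ω₂}

/-- The Weierstrass zeta-function for the lattice generated by `ω₁` and `ω₂`. -/
noncomputable def wzeta (ω₁ ω₂ : ℂ) (u : ℂ) : ℂ :=
  1 / u + ∑' kn : ℤ × ℤ,
    if kn = (0, 0) then 0
    else 1 / (u - ((kn.1 : ℂ) * ω₁ + (kn.2 : ℂ) * ω₂))
      + 1 / ((kn.1 : ℂ) * ω₁ + (kn.2 : ℂ) * ω₂)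
      + u / ((kn.1 : ℂ) * ω₁ + (kn.2 : ℂ) * ω₂) ^ 2

open Filter Asymptotics Bornology Topology
open scoped UpperHalfPlane

/-- The term contributed by a lattice point `γ` to the series for `ζ(u)`. At `γ = 0` Lean's
convention `x / 0 = 0` makes it `1 / u`, so the sum over the whole lattice is `ζ(u)`. -/
noncomputable def wzetaTerm (u γ : ℂ) : ℂ := 1 / (u - γ) + 1 / γ + u / γ ^ 2

lemma wzetaTerm_eq_mul {u γ : ℂ} (hγ : γ ≠ 0) (hu : γ ≠ u) :
    wzetaTerm u γ = -u ^ 2 * (γ⁻¹ ^ 2 * (γ - u)⁻¹) := by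
  have hγu : γ - u ≠ 0 := sub_ne_zero.mpr hu
  rw [wzetaTerm, ← neg_sub γ u]
  field_simp
  ring

lemma isBigO_wzetaTerm (u : ℂ) : wzetaTerm u =O[cobounded ℂ] fun γ ↦ γ⁻¹ ^ 3 := by
  have hinv : (fun γ ↦ (γ - u)⁻¹) =O[cobounded ℂ] fun γ ↦ γ⁻¹ :=
    (isLittleO_const_id_cobounded u).right_isBigO_sub.inv_rev <|
      (eventually_ne_cobounded 0).mono fun _ hγ h ↦ absurd h hγ
  have hmul := ((isBigO_refl (fun γ : ℂ ↦ γ⁻¹ ^ 2) _).mul hinv).const_mul_left (-u ^ 2)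
  refine hmul.congr' ?_ (.of_forall fun γ ↦ (pow_succ γ⁻¹ 2).symm)
  filter_upwards [eventually_ne_cobounded 0, eventually_ne_cobounded u] with γ hγ hu
  exact (wzetaTerm_eq_mul hγ hu).symm

lemma summable_wzetaTerm (L : Submodule ℤ ℂ) [DiscreteTopology L] [IsZLattice ℝ L] (u : ℂ) :
    Summable fun γ : L ↦ wzetaTerm u γ := by
  have hcobounded : Tendsto ((↑) : L → ℂ) cofinite (cobounded ℂ) := by
    rw [Metric.cobounded_eq_cocompact]
    exact L.toAddSubgroup.tendsto_coe_cofinite_of_discrete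
      (SetLike.isDiscrete_iff_discreteTopology.mpr inferInstance)
  have hrank : Module.finrank ℤ L < 3 := by
    rw [ZLattice.rank ℝ, Complex.finrank_real_complex]
    norm_num
  refine summable_of_isBigO (ZLattice.summable_norm_pow_inv L 3 hrank) ?_
  simpa only [Function.comp_def, norm_pow, norm_inv] using!
    ((isBigO_wzetaTerm u).comp_tendsto hcobounded).norm_right

lemma hasSum_wzeta (L : PeriodPair) (u : ℂ) :
    HasSum (fun p : ℤ × ℤ ↦ wzetaTerm u (p.1 * L.ω₁ + p.2 * L.ω₂)) (wzeta L.ω₁ L.ω₂ u) := by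
  have hs : Summable fun p : ℤ × ℤ ↦ wzetaTerm u (p.1 * L.ω₁ + p.2 * L.ω₂) := by
    simpa only [Function.comp_def, LinearEquiv.coe_toEquiv, L.latticeEquiv_symm_apply] using
      L.latticeEquivProd.symm.toEquiv.summable_iff.mpr (summable_wzetaTerm L.lattice u)
  convert hs.hasSum using 1
  rw [hs.tsum_eq_add_tsum_ite (0, 0)]
  simp [wzeta, wzetaTerm]

lemma wzetaTerm_add_sub_wzetaTerm (u w γ : ℂ) :
    wzetaTerm (u + w) γ - wzetaTerm u γ = (1 / (u + w - γ) - 1 / (u - γ)) + w / γ ^ 2 := by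
  simp only [wzetaTerm, add_div]
  ring

lemma hasSum_sub_succ_of_tendsto {G : Type*} [AddCommGroup G] [TopologicalSpace G]
    [IsTopologicalAddGroup G] [T2Space G] {f : ℤ → G} {a b : G}
    (hs : Summable fun n ↦ f n - f (n + 1)) (ha : Tendsto f atBot (𝓝 a))
    (hb : Tendsto f atTop (𝓝 b)) : HasSum (fun n ↦ f n - f (n + 1)) (a - b) := by
  have hIco : HasSum (fun n ↦ f n - f (n + 1)) (a - b) (SummationFilter.symmetricIco ℤ) := by
    simp only [SummationFilter.hasSum_symmetricIco_int_iff, Finset.sum_Ico_int_sub]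
    exact (ha.comp (tendsto_neg_atTop_atBot.comp tendsto_natCast_atTop_atTop)).sub
      (hb.comp tendsto_natCast_atTop_atTop)
  rw [← hIco.tsum_eq, tsum_eq_of_summable_unconditional hs]
  exact hs.hasSum

section Telescoping

variable {K : Type*} [NormedField K] [NormSMulClass ℤ K]

lemma tendsto_one_div_sub_intCast_mul {ω : K} (hω : ω ≠ 0) (c : K) :
    Tendsto (fun n : ℤ ↦ 1 / (c - n * ω)) (atBot ⊔ atTop) (𝓝 0) := by
  simp only [one_div]
  exact tendsto_inv₀_cobounded.comp <| (tendsto_const_sub_cobounded c).comp <|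
    (tendsto_mul_right_cobounded hω).comp tendsto_intCast_atBot_sup_atTop_cobounded

lemma hasSum_one_div_add_sub_one_div {ω c : K} (hω : ω ≠ 0)
    (hs : Summable fun n : ℤ ↦ 1 / (c + ω - n * ω) - 1 / (c - n * ω)) :
    HasSum (fun n : ℤ ↦ 1 / (c + ω - n * ω) - 1 / (c - n * ω)) 0 := by
  have hsucc (n : ℤ) : c - n * ω = c + ω - (n + 1 : ℤ) * ω := by
    push_cast
    ring
  obtain ⟨hbot, htop⟩ := tendsto_sup.mp (tendsto_one_div_sub_intCast_mul hω (c + ω))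
  simp only [hsucc] at hs ⊢
  simpa only [sub_zero] using hasSum_sub_succ_of_tendsto hs hbot htop

end Telescoping

lemma div_sq_eq_inv_mul_eisSummand {ω₁ ω₂ : ℂ} (τ : ℍ) (hτ : (τ : ℂ) = ω₁ / ω₂) (k n : ℤ) :
    ω₂ / (k * ω₁ + n * ω₂) ^ 2 = ω₂⁻¹ * EisensteinSeries.eisSummand 2 ![k, n] τ := by
  have hω₂ : ω₂ ≠ 0 := by
    rintro rfl
    exact τ.ne_zero (by simpa using hτ)
  have hfactor : k * ω₁ + n * ω₂ = ω₂ * (k * τ + n) := by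
    rw [hτ]
    field_simp
  have heis : EisensteinSeries.eisSummand 2 ![k, n] τ = ((k * (τ : ℂ) + n) ^ 2)⁻¹ := by
    simp [EisensteinSeries.eisSummand, zpow_neg]
  rw [hfactor, heis, mul_pow]
  field_simp

lemma E2_eq_eisensteinSeries_E2 (τ : ℍ) : E2 τ = EisensteinSeries.E2 τ := by
  have hsigma (n : ℕ) : sigmaC 1 n = (ArithmeticFunction.sigma 1 n : ℂ) := by
    simp [sigmaC, ArithmeticFunction.sigma_apply]
  rw [EisensteinSeries.E2_eq_tsum_cexp, E2, tsum_pnat_eq_tsum_succ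
    (f := fun n ↦ (ArithmeticFunction.sigma 1 n : ℂ) *
      Complex.exp (2 * Real.pi * Complex.I * τ) ^ n)]
  simp only [hsigma, qexp]

lemma eisensteinSeries_G2_eq_mul_E2 (τ : ℍ) :
    EisensteinSeries.G2 τ = (Real.pi : ℂ) ^ 2 / 3 * E2 τ := by
  have hpi : (Real.pi : ℂ) ≠ 0 := mod_cast Real.pi_ne_zero
  rw [E2_eq_eisensteinSeries_E2, EisensteinSeries.E2, Pi.smul_apply, smul_eq_mul, riemannZeta_two]
  field_simp
  ring

lemma linearIndependent_pair_of_im_div_ne_zero {ω₁ ω₂ : ℂ} (h : (ω₁ / ω₂).im ≠ 0) :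
    LinearIndependent ℝ ![ω₁, ω₂] := by
  have hω₂ : ω₂ ≠ 0 := by
    rintro rfl
    simp at h
  refine LinearIndependent.pair_iff.mpr fun s t hst ↦ ?_
  have hdiv : (s : ℂ) * (ω₁ / ω₂) + t = 0 := by
    simp only [Complex.real_smul] at hst
    field_simp
    linear_combination hst
  have hs : s = 0 := by simpa [h] using congrArg Complex.im hdiv
  exact ⟨hs, by simpa [hs] using hdiv⟩

section QuasiPeriod

variable (L : PeriodPair)

lemma hasSum_wzeta_add_sub_wzeta (u w : ℂ) :
    HasSum (fun p : ℤ × ℤ ↦ (1 / (u + w - (p.1 * L.ω₁ + p.2 * L.ω₂)) -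
        1 / (u - (p.1 * L.ω₁ + p.2 * L.ω₂))) + w / (p.1 * L.ω₁ + p.2 * L.ω₂) ^ 2)
      (wzeta L.ω₁ L.ω₂ (u + w) - wzeta L.ω₁ L.ω₂ u) := by
  simpa only [wzetaTerm_add_sub_wzetaTerm] using (hasSum_wzeta L (u + w)).sub (hasSum_wzeta L u)

lemma hasSum_wzeta_add_sub_wzeta_row (τ : ℍ) (hτ : (τ : ℂ) = L.ω₁ / L.ω₂) (u : ℂ) (k : ℤ) :
    HasSum (fun n : ℤ ↦ (1 / (u + L.ω₂ - (k * L.ω₁ + n * L.ω₂)) -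
        1 / (u - (k * L.ω₁ + n * L.ω₂))) + L.ω₂ / (k * L.ω₁ + n * L.ω₂) ^ 2)
      (L.ω₂⁻¹ * EisensteinSeries.e2Summand k τ) := by
  have hsum := (hasSum_wzeta_add_sub_wzeta L u L.ω₂).summable.prod_factor k
  have he2 : HasSum (fun n : ℤ ↦ L.ω₂ / (k * L.ω₁ + n * L.ω₂) ^ 2)
      (L.ω₂⁻¹ * EisensteinSeries.e2Summand k τ) := by
    simpa only [div_sq_eq_inv_mul_eisSummand τ hτ] using!
      (EisensteinSeries.e2Summand_summable k τ).hasSum.mul_left L.ω₂⁻¹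
  have htelescope : HasSum (fun n : ℤ ↦ 1 / (u + L.ω₂ - (k * L.ω₁ + n * L.ω₂)) -
      1 / (u - (k * L.ω₁ + n * L.ω₂))) 0 := by
    have hrow (n : ℤ) : u + L.ω₂ - (k * L.ω₁ + n * L.ω₂) = u - k * L.ω₁ + L.ω₂ - n * L.ω₂ := by
      ring
    have hdiff := hsum.sub he2.summable
    simp only [add_sub_cancel_right, hrow, ← sub_sub] at hdiff ⊢
    exact hasSum_one_div_add_sub_one_div (L.indep.ne_zero 1) hdiff
  simpa only [zero_add] using htelescope.add he2

lemma wzeta_add_sub_wzeta_eq_inv_mul_G2 (τ : ℍ) (hτ : (τ : ℂ) = L.ω₁ / L.ω₂) (u : ℂ) :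
    wzeta L.ω₁ L.ω₂ (u + L.ω₂) - wzeta L.ω₁ L.ω₂ u = L.ω₂⁻¹ * EisensteinSeries.G2 τ := by
  have hrows := (hasSum_wzeta_add_sub_wzeta L u L.ω₂).prod_fiberwise
    (hasSum_wzeta_add_sub_wzeta_row L τ hτ u)
  -- `G2` is summed symmetrically over `k`; here the sum over `k` is unconditional.
  rw [EisensteinSeries.G2, ← tsum_mul_left, tsum_eq_of_summable_unconditional hrows.summable]
  exact hrows.tsum_eq.symm

end QuasiPeriod

/-- The quasi-period `η₂ = ζ(u + ω₂) - ζ(u)` equals `(π²/(3ω₂)) E₂(τ)`; in particular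
it is independent of `u`. -/
theorem quasi_period_two_formula (ω₁ ω₂ : ℂ) (hω₁ : ω₁ ≠ 0) (hω₂ : ω₂ ≠ 0)
    (hτ : 0 < (ω₁ / ω₂).im) (u : ℂ)
    (hu : u ∉ lattice ω₁ ω₂) (hu' : u + ω₂ ∉ lattice ω₁ ω₂) :
    wzeta ω₁ ω₂ (u + ω₂) - wzeta ω₁ ω₂ u
      = (Real.pi : ℂ) ^ 2 / (3 * ω₂) * E2 (ω₁ / ω₂) := by
  let L : PeriodPair := ⟨ω₁, ω₂, linearIndependent_pair_of_im_div_ne_zero hτ.ne'⟩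
  let τ : ℍ := ⟨ω₁ / ω₂, hτ⟩
  calc wzeta ω₁ ω₂ (u + ω₂) - wzeta ω₁ ω₂ u
    _ = ω₂⁻¹ * EisensteinSeries.G2 τ := wzeta_add_sub_wzeta_eq_inv_mul_G2 L τ rfl u
    _ = ω₂⁻¹ * ((Real.pi : ℂ) ^ 2 / 3 * E2 (ω₁ / ω₂)) := by
      rw [eisensteinSeries_G2_eq_mul_E2]
    _ = (Real.pi : ℂ) ^ 2 / (3 * ω₂) * E2 (ω₁ / ω₂) := by
      field_simp
end

section
/- For every u ∈ ℂ with u ∉ Γ and u + ω₁ ∉ Γ, one has ζ(u + ω₁) − ζ(u) = −2πi/ω₂ + (π²ω₁/(3ω₂²)) · E2(τ), where τ = ω₁/ω₂. In particular, the quasi-period η₁ := ζ(u + ω₁) − ζ(u) is independent of u. -/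
/-!
By homogeneity one may take `ω₂ = 1` and `ω₁ = z` in the upper half plane. The difference
`ζ(v + z) - ζ(v)` is then the absolutely convergent sum over `γ = k z + n` of
`1 / (v + z - γ) - 1 / (v - γ) + z / γ ^ 2`, which is summed first over `n` and then over `k`.
By the partial fraction expansion of the cotangent, the row `k` contributes
`π cot π(v + z - k z) - π cot π(v - k z) + z ∑ₙ (k z + n)⁻²`. The cotangents telescope in `k`, and
since `cot` tends to `∓i` at `±i∞` they contribute `-2πi`. What remains is `z G₂(z)`, with
`G₂ = (π² / 3) E₂`.
-/

open Filter Topology SummationFilter Complex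
open scoped Real UpperHalfPlane ArithmeticFunction.sigma

lemma hasSum_sub_add_one_symmetricIco {G : Type*} [AddCommGroup G] [TopologicalSpace G]
    [ContinuousSub G] {f : ℤ → G} {a b : G}
    (hbot : Tendsto f atBot (𝓝 a)) (htop : Tendsto f atTop (𝓝 b)) :
    HasSum (fun k ↦ f k - f (k + 1)) (a - b) (symmetricIco ℤ) := by
  rw [hasSum_symmetricIco_int_iff]
  simp_rw [Finset.sum_Ico_int_sub]
  exact (hbot.comp (tendsto_neg_atTop_atBot.comp tendsto_natCast_atTop_atTop)).sub
    (htop.comp tendsto_natCast_atTop_atTop)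

lemma tendsto_cot_comap_im_atTop : Tendsto cot (comap im atTop) (𝓝 (-I)) := by
  have hre : Tendsto (fun x : ℂ ↦ (2 * I * x).re) (comap im atTop) atBot := by
    simpa using (tendsto_comap (f := im)).const_mul_atTop_of_neg (show (-2 : ℝ) < 0 by norm_num)
  have hexp : Tendsto (fun x : ℂ ↦ exp (2 * I * x)) (comap im atTop) (𝓝 0) :=
    tendsto_exp_comap_re_atBot.comp (tendsto_comap_iff.mpr hre)
  have hratio := (hexp.add_const 1).div ((hexp.const_sub 1).const_mul I) (by simp)
  simpa [Function.comp_def, Pi.div_def, ← cot_eq_exp_ratio] using hratio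

lemma tendsto_cot_comap_im_atBot : Tendsto cot (comap im atBot) (𝓝 I) := by
  have hneg : Tendsto (fun x : ℂ ↦ -x) (comap im atBot) (comap im atTop) :=
    tendsto_comap_iff.mpr (tendsto_neg_atBot_atTop.comp tendsto_comap)
  have hcot : (fun x ↦ -cot (-x)) = cot := by
    ext x
    simp [cot, div_neg]
  simpa [Function.comp_def, hcot] using (tendsto_cot_comap_im_atTop.comp hneg).neg

lemma sum_Icc_one_div_sub_eq_add_sum_cotTerm (x : ℂ) (N : ℕ) :
    ∑ n ∈ Finset.Icc (-N : ℤ) N, 1 / (x - n) = 1 / x + ∑ j ∈ Finset.range N, cotTerm x j := by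
  induction N with
  | zero => simp
  | succ N ih =>
    rw [Nat.cast_succ, Finset.sum_Icc_succ_eq_add_endpoints, ih, Finset.sum_range_succ, cotTerm]
    push_cast
    ring

lemma hasSum_one_div_sub_symmetricIcc {x : ℂ} (hx : x ∈ integerComplement) :
    HasSum (fun n : ℤ ↦ 1 / (x - n)) (π * cot (π * x)) (symmetricIcc ℤ) := by
  rw [hasSum_symmetricIcc_iff]
  simp_rw [sum_Icc_one_div_sub_eq_add_sum_cotTerm]
  simpa using (tendsto_logDeriv_euler_cot_sub hx).const_add (1 / x)

lemma hasSum_cot_sub_cot_symmetricIco (z : ℍ) (w : ℂ) :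
    HasSum (fun k : ℤ ↦ π * cot (π * (w - k * z)) - π * cot (π * (w - (k + 1 : ℤ) * z)))
      (-(2 * π * I)) (symmetricIco ℤ) := by
  have him : (fun k : ℤ ↦ (π * (w - k * z)).im) = fun k : ℤ ↦ π * w.im + -(π * z.im) * k := by
    ext k
    simp only [im_ofReal_mul, sub_im, ← ofReal_intCast, UpperHalfPlane.coe_im]
    ring
  have hc : -(π * z.im) < 0 := neg_lt_zero.mpr (mul_pos Real.pi_pos z.im_pos)
  have hbot : Tendsto (fun k : ℤ ↦ (π : ℂ) * (w - k * z)) atBot (comap im atTop) := by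
    rw [tendsto_comap_iff, Function.comp_def, him]
    exact tendsto_atTop_add_const_left _ _
      ((tendsto_intCast_atBot_iff.mpr tendsto_id).const_mul_atBot_of_neg hc)
  have htop : Tendsto (fun k : ℤ ↦ (π : ℂ) * (w - k * z)) atTop (comap im atBot) := by
    rw [tendsto_comap_iff, Function.comp_def, him]
    exact tendsto_atBot_add_const_left _ _ (tendsto_intCast_atTop_atTop.const_mul_atTop_of_neg hc)
  convert! hasSum_sub_add_one_symmetricIco
    ((tendsto_cot_comap_im_atTop.comp hbot).const_mul (π : ℂ))
    ((tendsto_cot_comap_im_atBot.comp htop).const_mul (π : ℂ)) using 1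
  ring

lemma G2_eq_pi_sq_div_three_mul_E2 (z : ℍ) : EisensteinSeries.G2 z = (π : ℂ) ^ 2 / 3 * E2 z := by
  rw [EisensteinSeries.G2_eq_tsum_cexp, riemannZeta_two, E2,
    tsum_pnat_eq_tsum_succ (f := fun n : ℕ ↦ (σ 1 n : ℂ) * exp (2 * π * I * z) ^ n)]
  simp only [ArithmeticFunction.sigma_apply, sigmaC, qexp]
  push_cast
  ring

/-- The term of the Weierstrass zeta series at the lattice point `γ`. Since `1 / 0 = 0`, its value
at `γ = 0` is the polar term `1 / u`. -/
noncomputable def zetaTerm (u γ : ℂ) : ℂ := 1 / (u - γ) + 1 / γ + u / γ ^ 2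

lemma zetaTerm_eq_mul {u γ : ℂ} (h₀ : γ ≠ 0) (hu : γ ≠ u) :
    zetaTerm u γ = -u ^ 2 * (γ⁻¹ ^ 2 * (γ - u)⁻¹) := by
  have h₁ : γ - u ≠ 0 := sub_ne_zero.mpr hu
  have h₂ : u - γ ≠ 0 := sub_ne_zero.mpr hu.symm
  rw [zetaTerm]
  field_simp
  ring

lemma sq_mul_le_cube_add_cube {R : Type*} [CommRing R] [LinearOrder R] [IsStrictOrderedRing R]
    {a b : R} (ha : 0 ≤ a) (hb : 0 ≤ b) : a ^ 2 * b ≤ a ^ 3 + b ^ 3 := by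
  have hrem : 0 ≤ (a + b) * (a - b) ^ 2 + a * b ^ 2 := by positivity
  linear_combination hrem

lemma summable_zetaTerm (L : PeriodPair) (u : ℂ) : Summable fun γ : L.lattice ↦ zetaTerm u γ := by
  have hcube (x : ℂ) : Summable fun γ : L.lattice ↦ ‖((γ : ℂ) - x)⁻¹‖ ^ 3 := by
    simpa only [norm_inv] using ZLattice.summable_norm_sub_inv_pow L.lattice 3 (by simp) x
  have hprod : Summable fun γ : L.lattice ↦ (γ : ℂ)⁻¹ ^ 2 * ((γ : ℂ) - u)⁻¹ := by
    refine .of_norm_bounded ((hcube 0).add (hcube u)) fun γ ↦ ?_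
    rw [norm_mul, norm_pow, sub_zero]
    exact sq_mul_le_cube_add_cube (norm_nonneg _) (norm_nonneg _)
  have hne (x : ℂ) : ∀ᶠ γ : L.lattice in cofinite, (γ : ℂ) ≠ x :=
    Subtype.val_injective.tendsto_cofinite.eventually (eventually_cofinite_ne x)
  refine (summable_congr_cofinite ?_).mpr (hprod.mul_left (-u ^ 2))
  filter_upwards [hne 0, hne u] with γ h₀ hu using zetaTerm_eq_mul h₀ hu

lemma hasSum_zetaTerm_wzeta (L : PeriodPair) (u : ℂ) :
    HasSum (fun kn : ℤ × ℤ ↦ zetaTerm u (kn.1 * L.ω₁ + kn.2 * L.ω₂)) (wzeta L.ω₁ L.ω₂ u) := by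
  have hs : Summable fun kn : ℤ × ℤ ↦ zetaTerm u (kn.1 * L.ω₁ + kn.2 * L.ω₂) := by
    simpa [Function.comp_def, PeriodPair.latticeEquiv_symm_apply] using
      L.latticeEquivProd.symm.toEquiv.summable_iff.mpr (summable_zetaTerm L u)
  convert! hs.hasSum using 1
  rw [hs.tsum_eq_add_tsum_ite (0, 0), wzeta]
  simp [zetaTerm]

lemma wzeta_mul (c ω₁ ω₂ u : ℂ) : wzeta (c * ω₁) (c * ω₂) (c * u) = wzeta ω₁ ω₂ u / c := by
  have hγ (k n : ℤ) : (k : ℂ) * (c * ω₁) + n * (c * ω₂) = c * (k * ω₁ + n * ω₂) := by ring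
  have hterm (γ : ℂ) : 1 / (c * u - c * γ) + 1 / (c * γ) + c * u / (c * γ) ^ 2
      = (1 / (u - γ) + 1 / γ + u / γ ^ 2) / c := by
    rw [← mul_sub]
    field
  simp only [wzeta, hγ, hterm, add_div, ← tsum_div_const, ite_div, zero_div]
  congr 1
  field

/-- The period pair `(z, 1)` of a point `z` of the upper half plane: every lattice reduces to one of
this form by homogeneity. -/
def periodPairOfUpperHalfPlane (z : ℍ) : PeriodPair where
  ω₁ := z
  ω₂ := 1
  indep := by
    rw [LinearIndependent.pair_iff]
    intro s t h
    have hs : s = 0 := by simpa [z.im_ne_zero] using congrArg im h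
    exact ⟨hs, by simpa [hs] using h⟩

lemma hasSum_zetaTerm_add_sub_symmetricIcc (z : ℍ) {v : ℂ} (hv : v ∉ lattice z 1) (k : ℤ) :
    HasSum (fun n : ℤ ↦ zetaTerm (v + z) (k * z + n) - zetaTerm v (k * z + n))
      (π * cot (π * (v + z - k * z)) - π * cot (π * (v + z - (k + 1 : ℤ) * z))
        + z * EisensteinSeries.e2Summand k z) (symmetricIcc ℤ) := by
  have hmem (m : ℤ) : v + z - m * z ∈ integerComplement := by
    rintro ⟨n, hn⟩
    exact hv ⟨m - 1, n, by push_cast; linear_combination -hn⟩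
  have hcot := (hasSum_one_div_sub_symmetricIcc (hmem k)).sub
    (hasSum_one_div_sub_symmetricIcc (hmem (k + 1)))
  have hrow : HasSum (fun n : ℤ ↦ EisensteinSeries.eisSummand 2 ![k, n] z)
      (EisensteinSeries.e2Summand k z) (symmetricIcc ℤ) :=
    (EisensteinSeries.e2Summand_summable k z).hasSum.mono_left (symmetricIcc ℤ).le_atTop
  convert! hcot.add (hrow.mul_left (z : ℂ)) using 2 with n
  have hsub : v + z - (k + 1 : ℤ) * z - n = v - (k * z + n) := by push_cast; ring
  have hsub' : v + z - k * z - n = v + z - (k * z + n) := by ring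
  have heis : EisensteinSeries.eisSummand 2 ![k, n] z = 1 / (k * z + n) ^ 2 := by
    simp [EisensteinSeries.eisSummand]
  rw [hsub, hsub', heis, zetaTerm, zetaTerm]
  ring

theorem wzeta_add_coe_sub_wzeta (z : ℍ) {v : ℂ} (hv : v ∉ lattice z 1) :
    wzeta z 1 (v + z) - wzeta z 1 v = -(2 * π * I) + z * EisensteinSeries.G2 z := by
  have hdiff : HasSum
      (fun kn : ℤ × ℤ ↦ zetaTerm (v + z) (kn.1 * z + kn.2) - zetaTerm v (kn.1 * z + kn.2))
      (wzeta z 1 (v + z) - wzeta z 1 v) := by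
    simpa [periodPairOfUpperHalfPlane] using
      (hasSum_zetaTerm_wzeta (periodPairOfUpperHalfPlane z) (v + z)).sub
        (hasSum_zetaTerm_wzeta (periodPairOfUpperHalfPlane z) v)
  have hrow (k : ℤ) : HasSum
      (fun n : ℤ ↦ zetaTerm (v + z) (k * z + n) - zetaTerm v (k * z + n))
      (π * cot (π * (v + z - k * z)) - π * cot (π * (v + z - (k + 1 : ℤ) * z))
        + z * EisensteinSeries.e2Summand k z) := by
    have hsum := (hdiff.summable.prod_factor k).hasSum
    rwa [HasSum.unique (hsum.mono_left (symmetricIcc ℤ).le_atTop)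
      (hasSum_zetaTerm_add_sub_symmetricIcc z hv k)] at hsum
  have hG2 : HasSum (EisensteinSeries.e2Summand · z) (EisensteinSeries.G2 z) (symmetricIco ℤ) := by
    rw [EisensteinSeries.G2_eq_tsum_symmetricIco]
    exact (EisensteinSeries.summable_e2Summand_symmetricIco z).hasSum
  -- `G₂` converges only conditionally, so the rows are summed along `-N ≤ k < N`.
  exact HasSum.unique ((hdiff.prod_fiberwise hrow).mono_left (symmetricIco ℤ).le_atTop)
    ((hasSum_cot_sub_cot_symmetricIco z (v + z)).add (hG2.mul_left (z : ℂ)))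

/-- The quasi-period `η₁ = ζ(u + ω₁) - ζ(u)` equals `-2πi/ω₂ + (π²ω₁/(3ω₂²)) E₂(τ)`;
in particular it is independent of `u`. -/
theorem quasi_period_one_formula (ω₁ ω₂ : ℂ) (hω₁ : ω₁ ≠ 0) (hω₂ : ω₂ ≠ 0)
    (hτ : 0 < (ω₁ / ω₂).im) (u : ℂ)
    (hu : u ∉ lattice ω₁ ω₂) (hu' : u + ω₁ ∉ lattice ω₁ ω₂) :
    wzeta ω₁ ω₂ (u + ω₁) - wzeta ω₁ ω₂ u
      = -(2 * Real.pi * Complex.I) / ω₂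
        + (Real.pi : ℂ) ^ 2 * ω₁ / (3 * ω₂ ^ 2) * E2 (ω₁ / ω₂) := by
  let z : ℍ := ⟨ω₁ / ω₂, hτ⟩
  have hz : (z : ℂ) = ω₁ / ω₂ := rfl
  have hω₁z : ω₂ * z = ω₁ := mul_div_cancel₀ ω₁ hω₂
  have hmul (v : ℂ) : wzeta ω₁ ω₂ (ω₂ * v) = wzeta z 1 v / ω₂ := by
    simpa only [hω₁z, mul_one] using wzeta_mul ω₂ z 1 v
  obtain ⟨v, rfl⟩ : ∃ v, u = ω₂ * v := ⟨u / ω₂, (mul_div_cancel₀ u hω₂).symm⟩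
  have hv : v ∉ lattice z 1 := by
    rintro ⟨k, n, rfl⟩
    exact hu ⟨k, n, by rw [← hω₁z]; ring⟩
  have hadd : ω₂ * v + ω₁ = ω₂ * (v + z) := by rw [mul_add, hω₁z]
  rw [hadd, hmul, hmul, ← sub_div, wzeta_add_coe_sub_wzeta z hv, G2_eq_pi_sq_div_three_mul_E2, hz]
  field_simp
end

section
/- Product formula for Δ: for all τ ∈ ℍ, Δ(τ) = q · ∏_{n=1}^∞ (1 − qⁿ)²⁴, where q = exp(2πiτ). In particular, Δ(τ) ≠ 0 for all τ ∈ ℍ. -/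
open scoped UpperHalfPlane

theorem bernoulli_four : bernoulli 4 = -1 / 30 := by
  rw [bernoulli_eq_bernoulli'_of_ne_one (by decide), bernoulli'_four]

theorem bernoulli_six : bernoulli 6 = 1 / 42 := by
  have bernoulli'_five : bernoulli' 5 = 0 :=
    bernoulli'_eq_zero_of_odd (by decide) (by decide)
  rw [bernoulli_eq_bernoulli'_of_ne_one (by decide), bernoulli'_def]
  norm_num [Finset.sum_range_succ, Nat.choose, bernoulli'_five]

theorem qexp_eq_qParam (τ : ℂ) : qexp τ = Function.Periodic.qParam 1 τ := by
  simp [qexp, Function.Periodic.qParam]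

theorem sigmaC_eq_sigma (k n : ℕ) : sigmaC k n = ArithmeticFunction.sigma k n := by
  simp [sigmaC, ArithmeticFunction.sigma_apply]

theorem E_eq_one_sub_tsum_sigmaC {k : ℕ} (hk : 3 ≤ k) (hk_even : Even k) (z : ℍ) :
    ModularForm.E hk z =
      1 - (2 * k / bernoulli k) * ∑' n : ℕ, sigmaC (k - 1) (n + 1) * qexp z ^ (n + 1) := by
  rw [EisensteinSeries.q_expansion_bernoulli hk hk_even,
    ← tsum_pnat_eq_tsum_succ (f := fun n ↦ sigmaC (k - 1) n * qexp z ^ n)]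
  simp only [sigmaC_eq_sigma, qexp, zpow_natCast]

theorem E4_eq_E₄ (z : ℍ) : E4 z = ModularForm.E₄ z := by
  rw [E_eq_one_sub_tsum_sigmaC _ (by decide), bernoulli_four, E4]
  push_cast
  ring

theorem E6_eq_E₆ (z : ℍ) : E6 z = ModularForm.E₆ z := by
  rw [E_eq_one_sub_tsum_sigmaC _ (by decide), bernoulli_six, E6]
  push_cast
  ring

theorem Δfun_eq_discriminant (z : ℍ) : Δfun z = ModularForm.discriminant z := by
  rw [Δfun, E4_eq_E₄, E6_eq_E₆, ModularForm.discriminant_eq_E₄_cube_sub_E₆_sq]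

theorem discriminant_eq_qexp_mul_tprod (z : ℍ) :
    ModularForm.discriminant z = qexp z * ∏' n : ℕ, (1 - qexp z ^ (n + 1)) ^ 24 := by
  rw [ModularForm.discriminant_eq_q_prod, qexp_eq_qParam]

/-- The product formula `Δ = q ∏_{n≥1} (1 - qⁿ)²⁴`; in particular `Δ` has no zeros on `ℍ`. -/
theorem delta_product_formula (τ : ℂ) (hτ : 0 < τ.im) :
    Δfun τ = qexp τ * ∏' n : ℕ, (1 - qexp τ ^ (n + 1)) ^ 24 ∧ Δfun τ ≠ 0 := by
  lift τ to ℍ using hτ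
  rw [Δfun_eq_discriminant]
  exact ⟨discriminant_eq_qexp_mul_tprod τ, ModularForm.discriminant_ne_zero τ⟩
end
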